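/- Let Λ be an artin algebra. Then Λ is self-injective (both Λ_Λ and _ΛΛ are injective) if and only if φ-dim(Λ) = 0, i.e. φ(M) = 0 for all finitely generated right Λ-modules M. -/

import Mathlib

open Module Function

universe u

variable (R : Type u) [Ring R]

/-- A finitely generated right `R`-module, encoded as a module over `Rᵐᵒᵖ`. -/
structure FGMod where
  carrier : Type u
  [isAddCommGroup : AddCommGroup carrier]
  [isModule : Module Rᵐᵒᵖ carrier]
  [isFinite : Module.Finite Rᵐᵒᵖ carrier]

attribute [instance] FGMod.isAddCommGroup FGMod.isModule FGMod.isFinite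

instance : CoeSort (FGMod R) (Type u) := ⟨FGMod.carrier⟩

variable {R}

/-- Isomorphism of f.g. right modules. -/
def FGMod.Iso (M N : FGMod R) : Prop := Nonempty (M ≃ₗ[Rᵐᵒᵖ] N)

/-- Direct sum. -/
def FGMod.prod (M N : FGMod R) : FGMod R := ⟨M × N⟩

/-- `M^k`, the direct sum of `k` copies of `M`. -/
def FGMod.pow (M : FGMod R) (k : ℕ) : FGMod R := ⟨Fin k → M⟩

/-- `N` is (isomorphic to) a direct summand of `M`. -/
def FGMod.IsSummand (N M : FGMod R) : Prop :=
  ∃ A B : Submodule Rᵐᵒᵖ M, IsCompl A B ∧ Nonempty (N ≃ₗ[Rᵐᵒᵖ] A)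

/-- `M` is indecomposable. -/
def FGMod.Indec (M : FGMod R) : Prop :=
  Nontrivial M ∧ ∀ A B : Submodule Rᵐᵒᵖ M, IsCompl A B → A = ⊥ ∨ B = ⊥

/-- `M` is projective. -/
def FGMod.Proj (M : FGMod R) : Prop := Module.Projective Rᵐᵒᵖ M

/-- `f : P → M` is a projective cover: `P` projective, `f` surjective with superfluous kernel. -/
def IsProjCover (M P : FGMod R) (f : P →ₗ[Rᵐᵒᵖ] M) : Prop :=
  P.Proj ∧ Surjective f ∧ ∀ N : Submodule Rᵐᵒᵖ P, N ⊔ LinearMap.ker f = ⊤ → N = ⊤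

/-- `N` is a (first) syzygy of `M`: the kernel of a projective cover of `M`. -/
def IsSyzygy (M N : FGMod R) : Prop :=
  ∃ (P : FGMod R) (f : P →ₗ[Rᵐᵒᵖ] M),
    IsProjCover M P f ∧ Nonempty (N ≃ₗ[Rᵐᵒᵖ] LinearMap.ker f)

/-- `N` is an `n`-th syzygy of `M`. -/
def IsSyzygyN : ℕ → FGMod R → FGMod R → Prop
  | 0, M, N => M.Iso N
  | n+1, M, N => ∃ L, IsSyzygy M L ∧ IsSyzygyN n L N

/-- `M` has projective dimension at most `n`. -/
def HasPdLE : ℕ → FGMod R → Prop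
  | 0, M => M.Proj
  | n+1, M => M.Proj ∨ ∃ N, IsSyzygy M N ∧ HasPdLE n N

/-- `M` has finite projective dimension. -/
def FinPd (M : FGMod R) : Prop := ∃ n, HasPdLE n M

/-- The projective dimension of `M` (junk value if infinite). -/
noncomputable def pdIT (M : FGMod R) : ℕ := sInf {n | HasPdLE n M}

variable (R)

/-- The Igusa–Todorov relations in the free abelian group on f.g. right modules:
`[A] - [B] - [C]` whenever `A ≅ B ⊕ C`, and `[P]` for `P` projective. -/
def ITRel : Set (FreeAbelianGroup (FGMod R)) :=
  {x | ∃ A B C : FGMod R, Nonempty (A ≃ₗ[Rᵐᵒᵖ] (B × C : Type u)) ∧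
        x = FreeAbelianGroup.of A - FreeAbelianGroup.of B - FreeAbelianGroup.of C} ∪
  {x | ∃ P : FGMod R, P.Proj ∧ x = FreeAbelianGroup.of P}

/-- The Igusa–Todorov group `K`. -/
def ITK := FreeAbelianGroup (FGMod R) ⧸ AddSubgroup.closure (ITRel R)

noncomputable instance : AddCommGroup (ITK R) :=
  QuotientAddGroup.Quotient.addCommGroup _

/-- The class `[M]` in `K`. -/
noncomputable def ITcls (M : FGMod R) : ITK R := QuotientAddGroup.mk (FreeAbelianGroup.of M)

/-- `⟨M⟩`: the subgroup of `K` generated by the indecomposable non-projective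
direct summands of `M`. -/
noncomputable def ITgen (M : FGMod R) : AddSubgroup (ITK R) :=
  AddSubgroup.closure
    {x | ∃ N : FGMod R, N.IsSummand M ∧ N.Indec ∧ ¬N.Proj ∧ x = ITcls R N}

/-- The rank of a subgroup of `K`. -/
noncomputable def rkIT (H : AddSubgroup (ITK R)) : ℕ :=
  Module.finrank ℤ (AddSubgroup.toIntSubmodule H)

/-- `OmK` is a syzygy endomorphism of `K`: a group endomorphism sending `[M]` to `[ΩM]`. -/
def IsSyzygyEnd (OmK : AddMonoid.End (ITK R)) : Prop :=
  ∀ M N : FGMod R, IsSyzygy M N → OmK (ITcls R M) = ITcls R N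

/-- The Igusa–Todorov function `φ`: the least `n` such that the rank of
`Ω^i⟨M⟩` equals that of `Ω^n⟨M⟩` for all `i ≥ n`. -/
noncomputable def phiIT (OmK : AddMonoid.End (ITK R)) (M : FGMod R) : ℕ :=
  sInf {n | ∀ i, n ≤ i →
    rkIT R ((ITgen R M).map ((OmK ^ i : AddMonoid.End (ITK R)) : ITK R →+ ITK R))
      = rkIT R ((ITgen R M).map ((OmK ^ n : AddMonoid.End (ITK R)) : ITK R →+ ITK R))}

/-- The second Igusa–Todorov function `ψ`. -/
noncomputable def psiIT (OmK : AddMonoid.End (ITK R)) (M : FGMod R) : ℕ :=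
  phiIT R OmK M + sSup {d | ∃ N X : FGMod R, IsSyzygyN (phiIT R OmK M) M N ∧
      X.IsSummand N ∧ FinPd X ∧ d = pdIT X}

/-- The socle of a module: the sum of its simple submodules. -/
def socleIT (M : FGMod R) : Submodule Rᵐᵒᵖ M :=
  sSup {S : Submodule Rᵐᵒᵖ M | IsSimpleModule Rᵐᵒᵖ S}

/-!
Let `Λ` be right artinian. If `Λ` is injective as a right module, then all right ideals and all
finitely generated left ideals are annihilators, so `Λ` is left noetherian and, by Baer's criterion,
injective as a left module. Hence only the right module structure matters.

If `Λ` is injective as a right module, sending `M` to the cokernel of a left approximation of `M` by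
projectives is well defined on `K` and is a left inverse of the syzygy endomorphism `Ω`, so no rank
ever drops.

Conversely, suppose `φ = 0`, and let `0 → P → E → S → 0` be exact with `P` projective and `S` simple
and not projective. Then `Ω[E] = Ω[S]`, so `[E] - [S]` lies in `⟨E ⊕ S⟩` and in the kernel of `Ω`;
since `Ω` preserves the rank of `⟨E ⊕ S⟩`, this element is torsion. Counting the summands
isomorphic to `S` is a homomorphism `K → ℤ`, so `S` is a summand of `E`. The inclusion of `S` in `E`
cannot factor through `P`, which would make `S` a summand of `P`, so it is a section of `E → S` up
to an automorphism of `S`. Thus `Ext¹(S, Λ) = 0` for every simple `S`, and Baer's criterion follows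
by climbing one simple factor at a time from a right ideal to `Λ`.
-/

namespace SelfInjective

open MulOpposite

section Modules

variable {A : Type u} [Ring A]

theorem exists_extension_of_ker_le {M N E : Type u} [AddCommGroup M] [Module A M]
    [AddCommGroup N] [Module A N] [AddCommGroup E] [Module A E] (hE : Module.Injective A E)
    (f : M →ₗ[A] N) (g : M →ₗ[A] E) (h : LinearMap.ker f ≤ LinearMap.ker g) :
    ∃ t : N →ₗ[A] E, ∀ x, t (f x) = g x := by
  obtain ⟨t, ht⟩ := hE.out ((LinearMap.ker f).liftQ f le_rfl)
    (LinearMap.ker_eq_bot.mp (Submodule.ker_liftQ_eq_bot _ _ _ le_rfl))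
    ((LinearMap.ker f).liftQ g h)
  exact ⟨t, fun x => by simpa using ht (Submodule.Quotient.mk x)⟩

theorem exists_equiv_of_iInf_ker_le {ι : Type*} [Finite ι] {M S : Type*} {T : ι → Type*}
    [AddCommGroup M] [Module A M] [AddCommGroup S] [Module A S] [IsSimpleModule A S]
    [∀ i, AddCommGroup (T i)] [∀ i, Module A (T i)] [∀ i, IsSimpleModule A (T i)]
    (f : ∀ i, M →ₗ[A] T i) {g : M →ₗ[A] S} (hg : g ≠ 0)
    (h : ⨅ i, LinearMap.ker (f i) ≤ LinearMap.ker g) : ∃ i, Nonempty (T i ≃ₗ[A] S) := by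
  classical
  have := Fintype.ofFinite ι
  rw [← LinearMap.ker_pi] at h
  obtain ⟨t, ht⟩ := IsSemisimpleModule.extension_property
    ((LinearMap.ker (LinearMap.pi f)).liftQ (LinearMap.pi f) le_rfl)
    (LinearMap.ker_eq_bot.mp (Submodule.ker_liftQ_eq_bot _ _ _ le_rfl))
    ((LinearMap.ker (LinearMap.pi f)).liftQ g h)
  have ht0 : t ≠ 0 := by
    rintro rfl
    refine hg (LinearMap.ext fun x => ?_)
    simpa using (LinearMap.congr_fun ht (Submodule.Quotient.mk x)).symm
  obtain ⟨i, hi⟩ : ∃ i, t ∘ₗ LinearMap.single A T i ≠ 0 := by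
    by_contra! h0
    exact ht0 (LinearMap.pi_ext' fun i => by rw [h0 i, LinearMap.zero_comp])
  exact ⟨i, ⟨.ofBijective _ (LinearMap.bijective_of_ne_zero hi)⟩⟩

theorem nonempty_equiv_quotient_of_annihilator_le [IsArtinianRing A] {S : Type*} [AddCommGroup S]
    [Module A S] [IsSimpleModule A S] {m : Ideal A} [hm : m.IsMaximal]
    (h : Module.annihilator A S ≤ m) : Nonempty (S ≃ₗ[A] A ⧸ m) := by
  have : IsSimpleModule A (A ⧸ m) := isSimpleModule_iff_isCoatom.mpr hm.out
  obtain ⟨F, hF⟩ := Finset.exists_inf_le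
    fun s : S => LinearMap.ker (LinearMap.toSpanSingleton A S s)
  have hle : ⨅ s : F, LinearMap.ker (LinearMap.toSpanSingleton A S s) ≤ LinearMap.ker m.mkQ := by
    rw [m.ker_mkQ]
    refine le_trans (fun a ha => Module.mem_annihilator.mpr fun s => ?_) h
    refine LinearMap.mem_ker.mp (hF s ?_)
    simpa [Submodule.mem_finsetInf] using ha
  have hne : m.mkQ ≠ 0 := fun h0 => hm.ne_top (by rw [← m.ker_mkQ, h0, LinearMap.ker_zero])
  obtain ⟨-, e⟩ := exists_equiv_of_iInf_ker_le (T := fun _ : F => S) _ hne hle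
  exact e

theorem nonempty_equiv_of_annihilator_sup_ne_top [IsArtinianRing A] {S T : Type*} [AddCommGroup S]
    [Module A S] [IsSimpleModule A S] [AddCommGroup T] [Module A T] [IsSimpleModule A T]
    (h : Module.annihilator A S ⊔ Module.annihilator A T ≠ ⊤) : Nonempty (S ≃ₗ[A] T) := by
  obtain ⟨m, _, hm⟩ := Ideal.exists_le_maximal _ h
  obtain ⟨eS⟩ := nonempty_equiv_quotient_of_annihilator_le (le_sup_left.trans hm)
  obtain ⟨eT⟩ := nonempty_equiv_quotient_of_annihilator_le (le_sup_right.trans hm)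
  exact ⟨eS.trans eT.symm⟩

theorem finite_range_annihilator_quotient_maximal [IsArtinianRing A] :
    (Set.range fun m : {m : Ideal A // m.IsMaximal} => Module.annihilator A (A ⧸ m.1)).Finite := by
  have (m : {m : Ideal A // m.IsMaximal}) : IsSimpleModule A (A ⧸ m.1) :=
    isSimpleModule_iff_isCoatom.mpr m.2.out
  obtain ⟨F, hF⟩ := Finset.exists_inf_le (Subtype.val : {m : Ideal A // m.IsMaximal} → Ideal A)
  refine (F.finite_toSet.image fun m => Module.annihilator A (A ⧸ m.1)).subset ?_
  rintro _ ⟨m, rfl⟩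
  have hne : m.1.mkQ ≠ 0 := fun h0 =>
    m.2.ne_top (by rw [← m.1.ker_mkQ, h0, LinearMap.ker_zero])
  obtain ⟨n, ⟨e⟩⟩ := exists_equiv_of_iInf_ker_le (fun n : F => n.1.1.mkQ) hne (by
    simp only [Submodule.ker_mkQ]
    refine le_trans (fun a ha => ?_) (hF m)
    simpa [Submodule.mem_finsetInf] using ha)
  exact ⟨n, n.2, e.annihilator_eq⟩

end Modules

theorem range_eq_of_factorsThrough {ι α : Type*} {a b : ι → α} (ha : (Set.range a).Finite)
    (hba : Set.range b ⊆ Set.range a) (hab : a.FactorsThrough b) : Set.range b = Set.range a := by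
  cases isEmpty_or_nonempty α
  · exact Subsingleton.elim _ _
  obtain ⟨e, rfl⟩ := (factorsThrough_iff a).mp hab
  refine Set.eq_of_subset_of_ncard_le hba ?_ ha
  rw [Set.range_comp]
  exact Set.ncard_image_le (ha.subset hba)

variable {L : Type u} [Ring L]

/-- The left ideal of elements killing, from the left, a right ideal of `L`. -/
def leftAnnihilator (N : Submodule Lᵐᵒᵖ L) : Ideal L where
  carrier := {a | ∀ c ∈ N, a * c = 0}
  add_mem' ha hb c hc := by rw [add_mul, ha c hc, hb c hc, add_zero]
  zero_mem' c _ := zero_mul c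
  smul_mem' r a ha c hc := by rw [smul_eq_mul, mul_assoc, ha c hc, mul_zero]

/-- The right ideal of elements killing, from the right, a left ideal of `L`. -/
def rightAnnihilator (I : Ideal L) : Submodule Lᵐᵒᵖ L where
  carrier := {c | ∀ a ∈ I, a * c = 0}
  add_mem' hc hd a ha := by rw [mul_add, hc a ha, hd a ha, add_zero]
  zero_mem' a _ := mul_zero a
  smul_mem' r c hc a ha := by rw [smul_eq_mul_unop, ← mul_assoc, hc a ha, zero_mul]

theorem linearMap_apply_eq_apply_one_mul (f : L →ₗ[Lᵐᵒᵖ] L) (x : L) : f x = f 1 * x := by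
  simpa using f.map_smul (op x) 1

theorem leftAnnihilator_rightAnnihilator_le (hL : Module.Injective Lᵐᵒᵖ L) {I : Ideal L}
    (hI : I.FG) : leftAnnihilator (rightAnnihilator I) ≤ I := by
  classical
  intro x hx
  obtain ⟨n, y, rfl⟩ := Submodule.fg_iff_exists_fin_generating_family.mp hI
  have hker : LinearMap.ker (LinearMap.pi fun i => RingEquiv.moduleEndSelfOp L (y i)) ≤
      LinearMap.ker (RingEquiv.moduleEndSelfOp L x) := by
    refine fun c hc => hx c fun a ha => ?_
    induction ha using Submodule.span_induction with
    | mem a ha => obtain ⟨i, rfl⟩ := ha; exact congrFun hc i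
    | zero => exact zero_mul c
    | add a b _ _ ha hb => rw [add_mul, ha, hb, add_zero]
    | smul r a _ ha => rw [smul_eq_mul, mul_assoc, ha, mul_zero]
  obtain ⟨t, ht⟩ := exists_extension_of_ker_le hL _ _ hker
  have hxt : x = ∑ i, t (Pi.single i 1) * y i := calc
    x = t y := by
      rw [← mul_one x, ← show (LinearMap.pi fun i => RingEquiv.moduleEndSelfOp L (y i)) 1 = y from
        funext fun i => mul_one (y i)]
      exact (ht 1).symm
    _ = ∑ i, t (Pi.single i (y i)) := by rw [← map_sum, Finset.univ_sum_single]
    _ = ∑ i, t (Pi.single i 1) * y i := Finset.sum_congr rfl fun i _ => by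
      simpa [← Pi.single_smul] using t.map_smul (op (y i)) (Pi.single i 1)
  rw [hxt]
  exact Submodule.sum_mem _ fun i _ => Ideal.mul_mem_left _ _ (Submodule.subset_span ⟨i, rfl⟩)

theorem isNoetherianRing_of_injective_op [IsArtinian Lᵐᵒᵖ L] (hL : Module.Injective Lᵐᵒᵖ L) :
    IsNoetherianRing L := by
  refine isNoetherian_iff_fg_wellFounded.mpr ?_
  refine StrictAnti.wellFoundedGT (f := fun I : {I : Ideal L // I.FG} => rightAnnihilator I.1) ?_
  intro I J hIJ
  refine lt_of_le_not_ge (fun c hc a ha => hc a (hIJ.le ha)) fun hge => hIJ.not_ge fun a ha => ?_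
  exact leftAnnihilator_rightAnnihilator_le hL I.2 fun c hc => hge hc a ha

theorem exists_simple_submodule_annihilated [IsArtinian Lᵐᵒᵖ L] (hL : Module.Injective Lᵐᵒᵖ L)
    (S : Type*) [AddCommGroup S] [Module Lᵐᵒᵖ S] [Nontrivial S] :
    ∃ N : Submodule Lᵐᵒᵖ L, IsSimpleModule Lᵐᵒᵖ N ∧
      ∀ c ∈ N, ∀ a ∈ Module.annihilator Lᵐᵒᵖ S, unop a * c = 0 := by
  have := isNoetherianRing_of_injective_op hL
  let I : Ideal L := (Module.annihilator Lᵐᵒᵖ S).toTwoSided.unop.asIdeal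
  have hI {a : Lᵐᵒᵖ} : unop a ∈ I ↔ a ∈ Module.annihilator Lᵐᵒᵖ S := by
    simp [I, TwoSidedIdeal.mem_unop_iff]
  have hne : rightAnnihilator I ≠ ⊥ := by
    intro hbot
    have h1 : (1 : L) ∈ I :=
      leftAnnihilator_rightAnnihilator_le hL (IsNoetherian.noetherian I) fun c hc => by
        have hc0 : c ∈ rightAnnihilator I := hc
        rw [hbot, Submodule.mem_bot] at hc0
        rw [hc0, mul_zero]
    have : Module.annihilator Lᵐᵒᵖ S = ⊤ := (Ideal.eq_top_iff_one _).mpr (hI.mp h1)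
    exact not_subsingleton S (Module.annihilator_eq_top_iff.mp this)
  obtain ⟨N, hN, hle⟩ := (eq_bot_or_exists_atom_le _).resolve_left hne
  exact ⟨N, isSimpleModule_iff_isAtom.mpr hN, fun c hc a ha => hle hc _ (hI.mpr ha)⟩

theorem nonempty_equiv_of_annihilated_equiv [IsArtinianRing Lᵐᵒᵖ] (hL : Module.Injective Lᵐᵒᵖ L)
    {S T : Type*} [AddCommGroup S] [Module Lᵐᵒᵖ S] [IsSimpleModule Lᵐᵒᵖ S]
    [AddCommGroup T] [Module Lᵐᵒᵖ T] [IsSimpleModule Lᵐᵒᵖ T] {N P : Submodule Lᵐᵒᵖ L}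
    [Nontrivial N] (hN : ∀ c ∈ N, ∀ a ∈ Module.annihilator Lᵐᵒᵖ S, unop a * c = 0)
    (hP : ∀ c ∈ P, ∀ a ∈ Module.annihilator Lᵐᵒᵖ T, unop a * c = 0) (e : N ≃ₗ[Lᵐᵒᵖ] P) :
    Nonempty (S ≃ₗ[Lᵐᵒᵖ] T) := by
  refine nonempty_equiv_of_annihilator_sup_ne_top fun htop => ?_
  obtain ⟨c, hc⟩ := exists_ne (0 : N)
  obtain ⟨h, hh⟩ := hL.out N.subtype N.injective_subtype (P.subtype ∘ₗ e.toLinearMap)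
  have hec : (e c : L) = h 1 * c := by
    rw [← linearMap_apply_eq_apply_one_mul]
    exact (hh c).symm
  obtain ⟨a, ha, b, hb, hab⟩ := Submodule.mem_sup.mp ((Ideal.eq_top_iff_one _).mp htop)
  have haec : unop a * (e c : L) = 0 := by
    rw [hec, ← mul_assoc]
    exact hN c c.2 (op (h 1) * a) (Ideal.mul_mem_left _ _ ha)
  have hsum : unop a * (e c : L) + unop b * e c = e c := by
    rw [← add_mul, ← unop_add, hab, unop_one, one_mul]
  rw [haec, hP _ (e c).2 b hb, add_zero] at hsum
  exact hc (e.map_eq_zero_iff.mp (Subtype.ext hsum.symm))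

theorem isArtinian_op_self [IsArtinianRing Lᵐᵒᵖ] : IsArtinian Lᵐᵒᵖ L :=
  isArtinian_of_linearEquiv (opLinearEquiv Lᵐᵒᵖ : L ≃ₗ[Lᵐᵒᵖ] Lᵐᵒᵖ).symm

theorem injective_op_self (hL : Module.Injective Lᵐᵒᵖ Lᵐᵒᵖ) : Module.Injective Lᵐᵒᵖ L :=
  ((Module.Baer.of_injective hL).of_equiv
    (opLinearEquiv Lᵐᵒᵖ : L ≃ₗ[Lᵐᵒᵖ] Lᵐᵒᵖ).symm).injective

theorem exists_injective_quotient_maximal [IsArtinianRing Lᵐᵒᵖ] (hL : Module.Injective Lᵐᵒᵖ L)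
    {m : Ideal Lᵐᵒᵖ} (hm : m.IsMaximal) : ∃ j : (Lᵐᵒᵖ ⧸ m) →ₗ[Lᵐᵒᵖ] L, Injective j := by
  have := isArtinian_op_self (L := L)
  have (m : {m : Ideal Lᵐᵒᵖ // m.IsMaximal}) : IsSimpleModule Lᵐᵒᵖ (Lᵐᵒᵖ ⧸ m.1) :=
    isSimpleModule_iff_isCoatom.mpr m.2.out
  have equiv_of_annihilator_eq {S T : Type u} [AddCommGroup S] [Module Lᵐᵒᵖ S]
      [IsSimpleModule Lᵐᵒᵖ S] [AddCommGroup T] [Module Lᵐᵒᵖ T] [IsSimpleModule Lᵐᵒᵖ T]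
      (h : Module.annihilator Lᵐᵒᵖ S = Module.annihilator Lᵐᵒᵖ T) : Nonempty (S ≃ₗ[Lᵐᵒᵖ] T) := by
    have := IsSimpleModule.nontrivial Lᵐᵒᵖ T
    refine nonempty_equiv_of_annihilator_sup_ne_top fun htop => not_subsingleton T ?_
    rwa [h, sup_idem, Module.annihilator_eq_top_iff] at htop
  choose N hsimple hN using fun m : {m : Ideal Lᵐᵒᵖ // m.IsMaximal} =>
    have := IsSimpleModule.nontrivial Lᵐᵒᵖ (Lᵐᵒᵖ ⧸ m.1)
    exists_simple_submodule_annihilated hL (Lᵐᵒᵖ ⧸ m.1)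
  -- Up to isomorphism `N` is an injective self-map of the finite set of simple modules.
  have hrange := range_eq_of_factorsThrough (b := fun m => Module.annihilator Lᵐᵒᵖ (N m))
    finite_range_annihilator_quotient_maximal (by
      rintro _ ⟨m, rfl⟩
      obtain ⟨n, hn, ⟨e⟩⟩ := isSimpleModule_iff_quot_maximal.mp (hsimple m)
      exact ⟨⟨n, hn⟩, e.symm.annihilator_eq⟩) (by
      intro m n hmn
      have := IsSimpleModule.nontrivial Lᵐᵒᵖ (N m)
      obtain ⟨e⟩ := equiv_of_annihilator_eq hmn
      obtain ⟨e'⟩ := nonempty_equiv_of_annihilated_equiv hL (hN m) (hN n) e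
      exact e'.annihilator_eq)
  obtain ⟨n, hn⟩ := hrange.ge ⟨⟨m, hm⟩, rfl⟩
  obtain ⟨e⟩ := equiv_of_annihilator_eq hn
  exact ⟨(N n).subtype ∘ₗ e.symm.toLinearMap, (N n).injective_subtype.comp e.symm.injective⟩

theorem rightAnnihilator_leftAnnihilator_le [IsArtinianRing Lᵐᵒᵖ]
    (hL : Module.Injective Lᵐᵒᵖ L) (N : Submodule Lᵐᵒᵖ L) :
    rightAnnihilator (leftAnnihilator N) ≤ N := by
  intro x hx
  by_contra hxN
  let f : Lᵐᵒᵖ →ₗ[Lᵐᵒᵖ] L ⧸ N := LinearMap.toSpanSingleton Lᵐᵒᵖ (L ⧸ N) (N.mkQ x)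
  have hf : LinearMap.ker f ≠ ⊤ := by
    rw [Ne, Ideal.eq_top_iff_one]
    simpa [f] using hxN
  obtain ⟨m, hm, hle⟩ := Ideal.exists_le_maximal _ hf
  obtain ⟨j, hj⟩ := exists_injective_quotient_maximal hL hm
  obtain ⟨h, hh⟩ := exists_extension_of_ker_le hL f (j ∘ₗ m.mkQ)
    (hle.trans (by simpa using LinearMap.ker_le_ker_comp m.mkQ j))
  -- `a` kills `N` from the left but not `x`.
  let a : L := (h ∘ₗ N.mkQ) 1
  have ha (y : L) : a * y = h (N.mkQ y) := (linearMap_apply_eq_apply_one_mul (h ∘ₗ N.mkQ) y).symm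
  have hax : a * x = j (m.mkQ 1) := by simpa [f, ha] using hh 1
  have haN : a ∈ leftAnnihilator N := fun y hy => by
    rw [ha, Submodule.mkQ_apply, (Submodule.Quotient.mk_eq_zero N).mpr hy, map_zero]
  rw [hx a haN, eq_comm, map_eq_zero_iff j hj, Submodule.mkQ_apply,
    Submodule.Quotient.mk_eq_zero] at hax
  exact hm.ne_top ((Ideal.eq_top_iff_one m).mpr hax)

theorem exists_eq_mul_right_of_fg [IsArtinianRing Lᵐᵒᵖ] (hL : Module.Injective Lᵐᵒᵖ L)
    {I : Ideal L} (hI : I.FG) (f : I →ₗ[L] L) : ∃ c, ∀ x : I, f x = x * c := by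
  induction I, hI using Submodule.fg_induction with
  | singleton x =>
    have hx := Submodule.mem_span_singleton_self (R := L) x
    obtain ⟨c, hc⟩ : f ⟨x, hx⟩ ∈ LinearMap.range (RingEquiv.moduleEndSelfOp L x) := by
      refine rightAnnihilator_leftAnnihilator_le hL _ fun a ha => ?_
      have hax : a • (⟨x, hx⟩ : Submodule.span L {x}) = 0 :=
        Subtype.ext (by simpa using ha x ⟨1, mul_one x⟩)
      rw [← smul_eq_mul, ← map_smul, hax, map_zero]
    refine ⟨c, fun ⟨y, hy⟩ => ?_⟩
    obtain ⟨b, rfl⟩ := Submodule.mem_span_singleton.mp hy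
    calc f ⟨b • x, hy⟩ = b • f ⟨x, hx⟩ := f.map_smul b ⟨x, hx⟩
      _ = b * (x * c) := by rw [← hc]; rfl
      _ = b • x * c := (mul_assoc b x c).symm
  | sup I J hI hJ ihI ihJ =>
    obtain ⟨c, hc⟩ := ihI (f ∘ₗ Submodule.inclusion le_sup_left)
    obtain ⟨d, hd⟩ := ihJ (f ∘ₗ Submodule.inclusion le_sup_right)
    have hcd : c - d ∈ rightAnnihilator I ⊔ rightAnnihilator J := by
      refine rightAnnihilator_leftAnnihilator_le hL _ fun a ha => ?_
      have haI : a ∈ I := leftAnnihilator_rightAnnihilator_le hL hI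
        fun y hy => ha y (Submodule.mem_sup_left hy)
      have haJ : a ∈ J := leftAnnihilator_rightAnnihilator_le hL hJ
        fun y hy => ha y (Submodule.mem_sup_right hy)
      rw [mul_sub, sub_eq_zero]
      exact (hc ⟨a, haI⟩).symm.trans (hd ⟨a, haJ⟩)
    obtain ⟨u, hu, v, hv, huv⟩ := Submodule.mem_sup.mp hcd
    have hcu : c - u = d + v := by rw [sub_eq_iff_eq_add, add_assoc, add_comm v, huv]; abel
    refine ⟨c - u, fun ⟨x, hx⟩ => ?_⟩
    obtain ⟨y, hy, z, hz, rfl⟩ := Submodule.mem_sup.mp hx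
    have hfy : f ⟨y, Submodule.mem_sup_left hy⟩ = y * (c - u) := by
      rw [mul_sub, hu y hy, sub_zero]; exact hc ⟨y, hy⟩
    have hfz : f ⟨z, Submodule.mem_sup_right hz⟩ = z * (c - u) := by
      rw [hcu, mul_add, hv z hz, add_zero]; exact hd ⟨z, hz⟩
    rw [add_mul, ← hfy, ← hfz, ← map_add]
    rfl

theorem injective_self_of_injective_op [IsArtinianRing Lᵐᵒᵖ] (hL : Module.Injective Lᵐᵒᵖ L) :
    Module.Injective L L := by
  have := isArtinian_op_self (L := L)
  have := isNoetherianRing_of_injective_op hL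
  refine Module.Baer.injective fun I f => ?_
  obtain ⟨c, hc⟩ := exists_eq_mul_right_of_fg hL (IsNoetherian.noetherian I) f
  exact ⟨LinearMap.toSpanSingleton L L c, fun x hx => (hc ⟨x, hx⟩).symm⟩

end SelfInjective

section IgusaTodorovGroup

variable {R}

theorem ITcls_eq_add {B A C : FGMod R} (e : B ≃ₗ[Rᵐᵒᵖ] A × C) :
    ITcls R B = ITcls R A + ITcls R C := by
  rw [← sub_eq_zero, ← sub_sub]
  exact (QuotientAddGroup.eq_zero_iff _).mpr
    (AddSubgroup.subset_closure (Or.inl ⟨B, A, C, ⟨e⟩, rfl⟩))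

theorem ITcls_eq_zero_of_proj {P : FGMod R} (hP : P.Proj) : ITcls R P = 0 :=
  (QuotientAddGroup.eq_zero_iff _).mpr (AddSubgroup.subset_closure (Or.inr ⟨P, hP, rfl⟩))

theorem FGMod.proj_of_subsingleton (P : FGMod R) [Subsingleton P] : P.Proj :=
  inferInstanceAs (Module.Projective Rᵐᵒᵖ P)

theorem ITcls_congr {M N : FGMod R} (e : M ≃ₗ[Rᵐᵒᵖ] N) : ITcls R M = ITcls R N := by
  let Z : FGMod R := ⟨PUnit⟩
  have : Subsingleton Z := inferInstanceAs (Subsingleton PUnit)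
  rw [ITcls_eq_add (C := Z) (e.trans LinearEquiv.prodUnique.symm),
    ITcls_eq_zero_of_proj Z.proj_of_subsingleton, add_zero]

theorem ITcls_eq_add_of_retraction {A B C : FGMod R} {i : A →ₗ[Rᵐᵒᵖ] B} {p : B →ₗ[Rᵐᵒᵖ] C}
    (hip : Exact i p) (hp : Surjective p) {r : B →ₗ[Rᵐᵒᵖ] A} (hr : r ∘ₗ i = LinearMap.id) :
    ITcls R B = ITcls R A + ITcls R C :=
  ITcls_eq_add (hip.splitInjectiveEquiv hp ⟨r, hr⟩).1

theorem ITcls_eq_of_exact_of_proj {A B P : FGMod R} {i : A →ₗ[Rᵐᵒᵖ] B} {p : B →ₗ[Rᵐᵒᵖ] P}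
    (hip : Exact i p) (hi : Injective i) (hp : Surjective p) (hP : P.Proj) :
    ITcls R B = ITcls R A := by
  have : Module.Projective Rᵐᵒᵖ P := hP
  obtain ⟨s, hs⟩ := Module.projective_lifting_property p LinearMap.id hp
  rw [ITcls_eq_add (hip.splitSurjectiveEquiv hi ⟨s, hs⟩).1, ITcls_eq_zero_of_proj hP, add_zero]

theorem ITK_hom_ext {G : Type*} [AddCommGroup G] {f g : ITK R →+ G}
    (h : ∀ M, f (ITcls R M) = g (ITcls R M)) : f = g := by
  have hfg : f.comp (QuotientAddGroup.mk' (AddSubgroup.closure (ITRel R))) =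
      g.comp (QuotientAddGroup.mk' (AddSubgroup.closure (ITRel R))) :=
    FreeAbelianGroup.lift_ext _ _ h
  ext x
  obtain ⟨y, rfl⟩ := QuotientAddGroup.mk'_surjective (AddSubgroup.closure (ITRel R)) x
  exact DFunLike.congr_fun hfg y

theorem exists_ITK_hom {G : Type*} [AddCommGroup G] (F : FGMod R → G)
    (hadd : ∀ A B C : FGMod R, (B ≃ₗ[Rᵐᵒᵖ] A × C) → F B = F A + F C)
    (hproj : ∀ P : FGMod R, P.Proj → F P = 0) :
    ∃ f : ITK R →+ G, ∀ M, f (ITcls R M) = F M := by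
  refine ⟨QuotientAddGroup.lift _ (FreeAbelianGroup.lift F) ?_,
    FreeAbelianGroup.lift_apply_of F⟩
  rw [AddSubgroup.closure_le]
  rintro x (⟨B, A, C, ⟨e⟩, rfl⟩ | ⟨P, hP, rfl⟩)
  · simp [AddMonoidHom.mem_ker, hadd A B C e]
  · simp [AddMonoidHom.mem_ker, hproj P hP]

end IgusaTodorovGroup

section Syzygies

variable {R}

theorem ITcls_ker_eq_ITcls_ker [IsNoetherianRing Rᵐᵒᵖ] {M P Q : FGMod R}
    {f : P →ₗ[Rᵐᵒᵖ] M} {g : Q →ₗ[Rᵐᵒᵖ] M}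
    (hP : P.Proj) (hQ : Q.Proj) (hf : Surjective f) (hg : Surjective g) :
    ITcls R ⟨LinearMap.ker f⟩ = ITcls R ⟨LinearMap.ker g⟩ := by
  have : Module.Projective Rᵐᵒᵖ P := hP
  obtain ⟨b, hb⟩ := Module.projective_lifting_property g f hg
  replace hb (x : P) : g (b x) = f x := LinearMap.congr_fun hb x
  -- The exact sequence `0 → ker f → P × ker g → Q → 0`, with second map `(x, y) ↦ b x + y`.
  let i : LinearMap.ker f →ₗ[Rᵐᵒᵖ] P × LinearMap.ker g :=
    (LinearMap.ker f).subtype.prod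
      ((-(b ∘ₗ (LinearMap.ker f).subtype)).codRestrict _ fun x => by simp [hb])
  let p : (P × LinearMap.ker g) →ₗ[Rᵐᵒᵖ] Q := b.coprod (LinearMap.ker g).subtype
  have hip : Exact i p := by
    rintro ⟨x, y⟩
    constructor
    · intro h
      have hyx : -b x = y := neg_eq_of_add_eq_zero_right h
      exact ⟨⟨x, by rw [LinearMap.mem_ker, ← hb, ← neg_eq_zero, ← map_neg, hyx]; exact y.2⟩,
        Prod.ext rfl (Subtype.ext hyx)⟩
    · rintro ⟨z, hz⟩
      rw [← hz]
      exact add_neg_cancel (b z)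
  have hi : Injective i := fun x y h => Subtype.ext (congrArg Prod.fst h)
  have hp : Surjective p := fun z => by
    obtain ⟨x, hx⟩ := hf (g z)
    exact ⟨(x, ⟨z - b x, by simp [hb, hx]⟩), by simp [p]⟩
  calc ITcls R ⟨LinearMap.ker f⟩
      = ITcls R ⟨P × LinearMap.ker g⟩ :=
        (ITcls_eq_of_exact_of_proj (A := ⟨_⟩) (B := ⟨_⟩) hip hi hp hQ).symm
    _ = ITcls R ⟨LinearMap.ker g⟩ := by
        rw [ITcls_eq_add (A := P) (C := ⟨LinearMap.ker g⟩) (.refl _ _),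
          ITcls_eq_zero_of_proj hP, zero_add]

theorem comp_pow_eq_self_of_comp_eq_self {A M P : Type*} [Semiring A] [AddCommMonoid M]
    [Module A M] [AddCommMonoid P] [Module A P] {f : P →ₗ[A] M} {g : Module.End A P}
    (hfg : f ∘ₗ g = f) (n : ℕ) :
    f ∘ₗ (g ^ n) = f := by
  induction n with
  | zero => rfl
  | succ n ih => rw [pow_succ', Module.End.mul_eq_comp, ← LinearMap.comp_assoc, hfg, ih]

theorem exists_isCompl_map_eq_top {A M P : Type*} [Ring A] [AddCommGroup M] [Module A M]
    [AddCommGroup P] [Module A P] [IsArtinian A P] [IsNoetherian A P] [Module.Projective A P]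
    {f : P →ₗ[A] M} (hf : Surjective f) {N : Submodule A P} (hN : N ≠ ⊤)
    (hNf : N ⊔ LinearMap.ker f = ⊤) :
    ∃ K K' : Submodule A P, IsCompl K K' ∧ K ≠ ⊤ ∧ Surjective (f.domRestrict K) := by
  have hfN : Surjective (f.domRestrict N) := by
    intro y
    obtain ⟨x, rfl⟩ := hf y
    obtain ⟨a, ha, b, hb, rfl⟩ := Submodule.mem_sup.mp (hNf.ge (Submodule.mem_top (x := x)))
    exact ⟨⟨a, ha⟩, by simp [LinearMap.mem_ker.mp hb]⟩
  obtain ⟨h, hh⟩ := Module.projective_lifting_property (f.domRestrict N) f hfN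
  let g : Module.End A P := N.subtype ∘ₗ h
  obtain ⟨n, hn, hcompl⟩ := ((Filter.eventually_ge_atTop 1).and
    (LinearMap.eventually_isCompl_ker_pow_range_pow g)).exists
  have hle : LinearMap.range (g ^ n) ≤ N := by
    obtain ⟨m, rfl⟩ := Nat.exists_eq_add_of_le' hn
    rintro _ ⟨x, rfl⟩
    rw [pow_succ', Module.End.mul_apply]
    exact (h _).2
  refine ⟨_, _, hcompl.symm, fun htop => hN (top_le_iff.mp (htop ▸ hle)), fun y => ?_⟩
  obtain ⟨x, rfl⟩ := hf y
  exact ⟨⟨(g ^ n) x, x, rfl⟩, LinearMap.congr_fun (comp_pow_eq_self_of_comp_eq_self hh n) x⟩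

theorem exists_isProjCover [IsArtinianRing Rᵐᵒᵖ] (M : FGMod R) :
    ∃ (P : FGMod R) (f : P →ₗ[Rᵐᵒᵖ] M), IsProjCover M P f := by
  obtain ⟨n, p, hp⟩ := Module.Finite.exists_fin' Rᵐᵒᵖ M
  obtain ⟨⟨P, f⟩, ⟨hP, hf⟩, hmin⟩ := exists_minimalFor_of_wellFoundedLT
    (fun x : Σ P : FGMod R, P →ₗ[Rᵐᵒᵖ] M => x.1.Proj ∧ Surjective x.2)
    (fun x => Module.length Rᵐᵒᵖ x.1)
    ⟨⟨⟨Fin n → Rᵐᵒᵖ⟩, p⟩, inferInstanceAs (Module.Projective Rᵐᵒᵖ (Fin n → Rᵐᵒᵖ)), hp⟩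
  have : Module.Projective Rᵐᵒᵖ P := hP
  refine ⟨P, f, hP, hf, fun N hNf => ?_⟩
  by_contra hN
  obtain ⟨K, K', hKK', hK, hKf⟩ := exists_isCompl_map_eq_top hf hN hNf
  have hKproj : Module.Projective Rᵐᵒᵖ K :=
    .of_split K.subtype (Submodule.projectionOnto K K' hKK') (by ext x; simp)
  exact (Submodule.length_lt hK).not_ge
    (hmin (j := ⟨⟨K⟩, f.domRestrict K⟩) ⟨hKproj, hKf⟩ (Submodule.length_lt hK).le)

theorem IsSyzygyEnd.apply_ITcls [IsArtinianRing Rᵐᵒᵖ] {OmK : AddMonoid.End (ITK R)}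
    (hOm : IsSyzygyEnd R OmK) {M P : FGMod R} {f : P →ₗ[Rᵐᵒᵖ] M} (hP : P.Proj)
    (hf : Surjective f) : OmK (ITcls R M) = ITcls R ⟨LinearMap.ker f⟩ := by
  obtain ⟨Q, g, hg⟩ := exists_isProjCover M
  rw [hOm M ⟨LinearMap.ker g⟩ ⟨Q, g, hg, ⟨.refl _ _⟩⟩]
  exact ITcls_ker_eq_ITcls_ker hg.1 hP hg.2.1 hf

end Syzygies

section Cosyzygies

variable {R}

theorem exists_comp_eq_of_exact_of_surjective {A L M N Q : Type*} [Ring A] [AddCommGroup L]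
    [Module A L] [AddCommGroup M] [Module A M] [AddCommGroup N] [Module A N] [AddCommGroup Q]
    [Module A Q] {f : L →ₗ[A] M} {q : M →ₗ[A] N} (hfq : Exact f q) (hq : Surjective q)
    {g : M →ₗ[A] Q} (hgf : g ∘ₗ f = 0) : ∃ s : N →ₗ[A] Q, s ∘ₗ q = g := by
  refine ⟨(LinearMap.ker q).liftQ g ?_ ∘ₗ (q.quotKerEquivOfSurjective hq).symm.toLinearMap, ?_⟩
  · rw [hfq.linearMap_ker_eq, LinearMap.range_le_ker_iff, hgf]
  · ext x
    rw [LinearMap.comp_apply, LinearMap.comp_apply, LinearEquiv.coe_coe,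
      ← LinearMap.quotKerEquivOfSurjective_apply_mk q hq x, LinearEquiv.symm_apply_apply,
      Submodule.liftQ_apply]

/-- `f : M → P` is a projective preenvelope (a left approximation of `M` by projectives): `P` is
projective and every homomorphism from `M` to a f.g. projective module factors through `f`. -/
def IsProjPreenvelope {M P : FGMod R} (f : M →ₗ[Rᵐᵒᵖ] P) : Prop :=
  P.Proj ∧ ∀ Q : FGMod R, Q.Proj → ∀ g : M →ₗ[Rᵐᵒᵖ] Q, ∃ t : P →ₗ[Rᵐᵒᵖ] Q, t ∘ₗ f = g

/-- `C` is a cosyzygy of `M`: the cokernel of a projective preenvelope of `M`. The preenvelope need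
not be minimal or injective, so `C` is determined only up to projective summands. -/
def IsCosyzygy (M C : FGMod R) : Prop :=
  ∃ (P : FGMod R) (f : M →ₗ[Rᵐᵒᵖ] P) (q : P →ₗ[Rᵐᵒᵖ] C),
    IsProjPreenvelope f ∧ Exact f q ∧ Surjective q

theorem IsProjPreenvelope.of_forall_self {M P : FGMod R} {f : M →ₗ[Rᵐᵒᵖ] P} (hP : P.Proj)
    (hf : ∀ g : M →ₗ[Rᵐᵒᵖ] R, ∃ t : P →ₗ[Rᵐᵒᵖ] R, t ∘ₗ f = g) : IsProjPreenvelope f := by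
  refine ⟨hP, fun Q (hQ : Module.Projective Rᵐᵒᵖ Q) g => ?_⟩
  obtain ⟨n, p, s, -, -, hps⟩ := Module.Finite.exists_comp_eq_id_of_projective Rᵐᵒᵖ Q
  let op : R ≃ₗ[Rᵐᵒᵖ] Rᵐᵒᵖ := MulOpposite.opLinearEquiv Rᵐᵒᵖ
  choose t ht using fun i => hf (op.symm.toLinearMap ∘ₗ LinearMap.proj i ∘ₗ s ∘ₗ g)
  refine ⟨p ∘ₗ LinearMap.pi fun i => op.toLinearMap ∘ₗ t i, ?_⟩
  have hts : (LinearMap.pi fun i => op.toLinearMap ∘ₗ t i) ∘ₗ f = s ∘ₗ g := by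
    ext x i
    exact congrArg op (LinearMap.congr_fun (ht i) x)
  rw [LinearMap.comp_assoc, hts, ← LinearMap.comp_assoc, hps, LinearMap.id_comp]

theorem IsProjPreenvelope.prodMap {M N P Q : FGMod R} {f : M →ₗ[Rᵐᵒᵖ] P} {g : N →ₗ[Rᵐᵒᵖ] Q}
    (hf : IsProjPreenvelope f) (hg : IsProjPreenvelope g) :
    IsProjPreenvelope (M := M.prod N) (P := P.prod Q) (f.prodMap g) := by
  have : Module.Projective Rᵐᵒᵖ P := hf.1
  have : Module.Projective Rᵐᵒᵖ Q := hg.1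
  refine ⟨inferInstanceAs (Module.Projective Rᵐᵒᵖ (P × Q)),
    fun X hX (h : M × N →ₗ[Rᵐᵒᵖ] X) => ?_⟩
  obtain ⟨t, ht⟩ := hf.2 X hX (h ∘ₗ LinearMap.inl Rᵐᵒᵖ M N)
  obtain ⟨u, hu⟩ := hg.2 X hX (h ∘ₗ LinearMap.inr Rᵐᵒᵖ M N)
  have htu : t.coprod u ∘ₗ f.prodMap g = h := by
    refine LinearMap.prod_ext ?_ ?_
    · rw [← ht]
      ext x
      simp
    · rw [← hu]
      ext y
      simp
  exact ⟨t.coprod u, htu⟩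

theorem IsCosyzygy.prod {M N C D : FGMod R} (hC : IsCosyzygy M C) (hD : IsCosyzygy N D) :
    IsCosyzygy (M.prod N) (C.prod D) := by
  obtain ⟨P, f, q, hf, hfq, hq⟩ := hC
  obtain ⟨Q, g, r, hg, hgr, hr⟩ := hD
  have hexact : Exact (f.prodMap g) (q.prodMap r) := by
    rw [LinearMap.exact_iff, LinearMap.ker_prodMap, LinearMap.range_prodMap, hfq.linearMap_ker_eq,
      hgr.linearMap_ker_eq]
  exact ⟨P.prod Q, f.prodMap g, q.prodMap r, hf.prodMap hg, hexact, hq.prodMap hr⟩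

theorem IsCosyzygy.of_equiv {M N C : FGMod R} (e : M ≃ₗ[Rᵐᵒᵖ] N) (hC : IsCosyzygy N C) :
    IsCosyzygy M C := by
  obtain ⟨P, f, q, hf, hfq, hq⟩ := hC
  refine ⟨P, f ∘ₗ e.toLinearMap, q, ⟨hf.1, fun Q hQ g => ?_⟩, ?_, hq⟩
  · obtain ⟨t, ht⟩ := hf.2 Q hQ (g ∘ₗ e.symm.toLinearMap)
    exact ⟨t, by rw [← LinearMap.comp_assoc, ht, LinearMap.comp_assoc]; ext x; simp⟩
  · rw [LinearMap.exact_iff, hfq.linearMap_ker_eq, LinearEquiv.range_comp]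

theorem IsCosyzygy.of_proj {P : FGMod R} (hP : P.Proj) : IsCosyzygy P ⟨PUnit⟩ :=
  ⟨P, LinearMap.id, 0, ⟨hP, fun _ _ g => ⟨g, rfl⟩⟩, fun x => by simp, fun _ => ⟨0, rfl⟩⟩

theorem IsCosyzygy.ker_of_surjective [IsNoetherianRing Rᵐᵒᵖ] (hR : Module.Injective Rᵐᵒᵖ R)
    {M P : FGMod R} {q : P →ₗ[Rᵐᵒᵖ] M} (hP : P.Proj) (hq : Surjective q) :
    IsCosyzygy ⟨LinearMap.ker q⟩ M := by
  refine ⟨P, (LinearMap.ker q).subtype, q, .of_forall_self hP fun g => ?_,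
    LinearMap.exact_subtype_ker_map q, hq⟩
  obtain ⟨t, ht⟩ := hR.out _ (LinearMap.ker q).injective_subtype g
  exact ⟨t, LinearMap.ext ht⟩

theorem IsCosyzygy.ITcls_eq {M C D : FGMod R} (hC : IsCosyzygy M C) (hD : IsCosyzygy M D) :
    ITcls R C = ITcls R D := by
  obtain ⟨P, f, q, hf, hfq, hq⟩ := hC
  obtain ⟨Q, g, r, hg, hgr, hr⟩ := hD
  obtain ⟨a, ha⟩ := hf.2 Q hg.1 g
  obtain ⟨b, hb⟩ := hg.2 P hf.1 f
  obtain ⟨c, hc⟩ := exists_comp_eq_of_exact_of_surjective hfq hq (g := r ∘ₗ a) (by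
    rw [LinearMap.comp_assoc, ha, hgr.linearMap_comp_eq_zero])
  obtain ⟨s, hs⟩ := exists_comp_eq_of_exact_of_surjective hfq hq (g := LinearMap.id - b ∘ₗ a) (by
    rw [LinearMap.sub_comp, LinearMap.comp_assoc, ha, hb, LinearMap.id_comp, sub_self])
  replace hc (x : P) : c (q x) = r (a x) := LinearMap.congr_fun hc x
  -- The split exact sequence `0 → P → C × Q → D → 0`, with second map `(z, y) ↦ c z - r y`.
  have hexact : Exact (q.prod a) (c.coprod (-r)) := by
    rintro ⟨z, y⟩
    constructor
    · intro h
      obtain ⟨x, rfl⟩ := hq z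
      have hr0 : r (a x - y) = 0 := by
        rw [map_sub, ← hc]
        simpa [sub_eq_add_neg] using h
      obtain ⟨w, hw⟩ := (hgr _).mp hr0
      refine ⟨x - f w, Prod.ext ?_ ?_⟩
      · simp [hfq.apply_apply_eq_zero]
      · rw [← ha] at hw
        simpa [sub_eq_iff_eq_add, add_comm y] using (sub_eq_iff_eq_add.mp hw.symm)
    · rintro ⟨x, hx⟩
      rw [← hx]
      simp [hc]
  have hsurj : Surjective (c.coprod (-r)) := fun d => by
    obtain ⟨y, rfl⟩ := hr d
    exact ⟨(0, -y), by simp⟩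
  have hretr : s.coprod b ∘ₗ q.prod a = LinearMap.id := by
    rw [LinearMap.coprod_comp_prod, hs, sub_add_cancel]
  calc ITcls R C = ITcls R (C.prod Q) := by
        rw [ITcls_eq_add (B := C.prod Q) (.refl _ _), ITcls_eq_zero_of_proj hg.1, add_zero]
    _ = ITcls R D := by
        rw [ITcls_eq_add_of_retraction (B := C.prod Q) hexact hsurj hretr,
          ITcls_eq_zero_of_proj hf.1, zero_add]

theorem isNoetherian_linearMap_self [IsNoetherianRing R] (M : FGMod R) :
    IsNoetherian R (M →ₗ[Rᵐᵒᵖ] R) := by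
  obtain ⟨n, s, hs⟩ := Module.Finite.exists_fin (R := Rᵐᵒᵖ) (M := M)
  let ev : (M →ₗ[Rᵐᵒᵖ] R) →ₗ[R] (Fin n → R) :=
    { toFun := fun g i => g (s i)
      map_add' := fun _ _ => rfl
      map_smul' := fun _ _ => rfl }
  exact isNoetherian_of_injective ev fun g h hgh => LinearMap.ext_on_range hs (congrFun hgh)

theorem exists_isCosyzygy [IsNoetherianRing R] (M : FGMod R) : ∃ C : FGMod R, IsCosyzygy M C := by
  have := isNoetherian_linearMap_self M
  obtain ⟨n, s, hs⟩ := Module.Finite.exists_fin (R := R) (M := M →ₗ[Rᵐᵒᵖ] R)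
  let op : R ≃ₗ[Rᵐᵒᵖ] Rᵐᵒᵖ := MulOpposite.opLinearEquiv Rᵐᵒᵖ
  let P : FGMod R := ⟨Fin n → Rᵐᵒᵖ⟩
  let f : M →ₗ[Rᵐᵒᵖ] P := LinearMap.pi fun i => op.toLinearMap ∘ₗ s i
  have hP : P.Proj := inferInstanceAs (Module.Projective Rᵐᵒᵖ (Fin n → Rᵐᵒᵖ))
  have hf : IsProjPreenvelope f := .of_forall_self hP fun g => by
    obtain ⟨c, rfl⟩ := (Submodule.mem_span_range_iff_exists_fun R).mp
      (hs.ge (Submodule.mem_top (x := g)))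
    refine ⟨∑ i, RingEquiv.moduleEndSelfOp R (c i) ∘ₗ op.symm.toLinearMap ∘ₗ LinearMap.proj i, ?_⟩
    ext x
    simp only [LinearMap.comp_apply, LinearMap.sum_apply, LinearMap.smul_apply]
    exact Finset.sum_congr rfl fun i _ => rfl
  exact ⟨⟨P ⧸ LinearMap.range f⟩, P, f, _, hf, LinearMap.exact_map_mkQ_range f,
    Submodule.mkQ_surjective _⟩

theorem IsSyzygyEnd.injective_of_injective [IsArtinianRing Rᵐᵒᵖ] [IsNoetherianRing R]
    (hR : Module.Injective Rᵐᵒᵖ R) {OmK : AddMonoid.End (ITK R)} (hOm : IsSyzygyEnd R OmK) :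
    Injective OmK := by
  choose C hC using exists_isCosyzygy (R := R)
  obtain ⟨cosyz, hcosyz⟩ := exists_ITK_hom (fun M : FGMod R => ITcls R (C M))
    (fun A B D e => by
      rw [(hC B).ITcls_eq (((hC A).prod (hC D)).of_equiv e), ITcls_eq_add (.refl _ _)])
    (fun P hP => by
      rw [(hC P).ITcls_eq (.of_proj hP)]
      exact ITcls_eq_zero_of_proj (FGMod.proj_of_subsingleton _))
  have hleft : cosyz.comp OmK = AddMonoidHom.id (ITK R) := ITK_hom_ext fun M => by
    obtain ⟨P, q, hP, hq, -⟩ := exists_isProjCover M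
    calc cosyz (OmK (ITcls R M)) = cosyz (ITcls R ⟨LinearMap.ker q⟩) := by
          rw [hOm.apply_ITcls hP hq]
      _ = ITcls R M := by
          rw [hcosyz, (hC _).ITcls_eq (IsCosyzygy.ker_of_surjective hR hP hq)]
  exact LeftInverse.injective (g := cosyz) (DFunLike.congr_fun hleft)

theorem phiIT_eq_zero_of_injective {OmK : AddMonoid.End (ITK R)} (h : Injective OmK)
    (M : FGMod R) : phiIT R OmK M = 0 := by
  have hpow (n : ℕ) : Injective (OmK ^ n : AddMonoid.End (ITK R)) := by
    rw [AddMonoid.End.coe_pow]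
    exact h.iterate n
  have hrank (n : ℕ) : rkIT R ((ITgen R M).map (OmK ^ n : AddMonoid.End (ITK R))) =
      rkIT R (ITgen R M) :=
    (LinearEquiv.finrank_eq
      (AddSubgroup.equivMapOfInjective (ITgen R M) _ (hpow n)).toIntLinearEquiv).symm
  exact Nat.eq_zero_of_le_zero (Nat.sInf_le fun n _ => (hrank n).trans (hrank 0).symm)

end Cosyzygies

section Summands

variable {R}

theorem FGMod.isSummand_iff {N M : FGMod R} : N.IsSummand M ↔
    ∃ (i : N →ₗ[Rᵐᵒᵖ] M) (p : M →ₗ[Rᵐᵒᵖ] N), p ∘ₗ i = LinearMap.id := by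
  constructor
  · rintro ⟨A, B, hAB, ⟨e⟩⟩
    exact ⟨A.subtype ∘ₗ e.toLinearMap, e.symm.toLinearMap ∘ₗ A.projectionOnto B hAB, by ext x; simp⟩
  · rintro ⟨i, p, hpi⟩
    replace hpi (x : N) : p (i x) = x := LinearMap.congr_fun hpi x
    refine ⟨_, _, LinearMap.isCompl_of_proj (f := i.rangeRestrict ∘ₗ p) ?_,
      ⟨LinearEquiv.ofInjective i (LeftInverse.injective hpi)⟩⟩
    rintro ⟨_, x, rfl⟩
    exact Subtype.ext (congrArg i (hpi x))

theorem FGMod.IsSummand.trans {N M K : FGMod R} (hNM : N.IsSummand M) (hMK : M.IsSummand K) :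
    N.IsSummand K := by
  obtain ⟨i, p, hpi⟩ := isSummand_iff.mp hNM
  obtain ⟨j, q, hqj⟩ := isSummand_iff.mp hMK
  refine isSummand_iff.mpr ⟨j ∘ₗ i, p ∘ₗ q, ?_⟩
  rw [LinearMap.comp_assoc, ← LinearMap.comp_assoc i, hqj, LinearMap.id_comp, hpi]

theorem FGMod.IsSummand.of_equiv_prod_left {M A B : FGMod R} (e : M ≃ₗ[Rᵐᵒᵖ] A × B) :
    A.IsSummand M :=
  isSummand_iff.mpr ⟨e.symm.toLinearMap ∘ₗ LinearMap.inl _ A B,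
    LinearMap.fst _ A B ∘ₗ e.toLinearMap, by ext x; simp⟩

theorem FGMod.IsSummand.of_equiv_prod_right {M A B : FGMod R} (e : M ≃ₗ[Rᵐᵒᵖ] A × B) :
    B.IsSummand M :=
  .of_equiv_prod_left (e.trans (.prodComm _ A B))

theorem FGMod.IsSummand.of_isUnit_comp {N M : FGMod R} {f : N →ₗ[Rᵐᵒᵖ] M} {g : M →ₗ[Rᵐᵒᵖ] N}
    (h : IsUnit (g ∘ₗ f : Module.End Rᵐᵒᵖ N)) : N.IsSummand M := by
  obtain ⟨w, hw⟩ := h.exists_left_inv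
  exact isSummand_iff.mpr ⟨f, w ∘ₗ g, hw⟩

theorem FGMod.Indec.equiv_of_isSummand {N M : FGMod R} (hM : M.Indec) (hN : Nontrivial N)
    (h : N.IsSummand M) : Nonempty (N ≃ₗ[Rᵐᵒᵖ] M) := by
  obtain ⟨A, B, hAB, ⟨e⟩⟩ := h
  rcases hM.2 A B hAB with rfl | rfl
  · exact absurd e.toEquiv.subsingleton (not_subsingleton N)
  · obtain rfl : A = ⊤ := by simpa using hAB.codisjoint
    exact ⟨e.trans Submodule.topEquiv⟩

variable [IsArtinianRing Rᵐᵒᵖ]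

theorem FGMod.Indec.isUnit_or_isNilpotent {N : FGMod R} (hN : N.Indec) (u : Module.End Rᵐᵒᵖ N) :
    IsUnit u ∨ IsNilpotent u := by
  obtain ⟨n, hn, hcompl⟩ := ((Filter.eventually_ge_atTop 1).and
    (LinearMap.eventually_isCompl_ker_pow_range_pow u)).exists
  rcases hN.2 _ _ hcompl with h | h
  · have hu : Injective (u ^ n) := LinearMap.ker_eq_bot.mp h
    obtain ⟨m, rfl⟩ := Nat.exists_eq_add_of_le' hn
    rw [pow_succ, Module.End.mul_eq_comp, LinearMap.coe_comp] at hu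
    exact Or.inl ((Module.End.isUnit_iff u).mpr
      (IsArtinian.bijective_of_injective_endomorphism u hu.of_comp))
  · exact Or.inr ⟨n, LinearMap.range_eq_bot.mp h⟩

theorem FGMod.Indec.isUnit_or_isUnit_of_add_eq_one {N : FGMod R} (hN : N.Indec)
    {u v : Module.End Rᵐᵒᵖ N} (huv : u + v = 1) : IsUnit u ∨ IsUnit v := by
  rw [eq_sub_of_add_eq' huv]
  exact (hN.isUnit_or_isNilpotent u).imp_right IsNilpotent.isUnit_one_sub

theorem FGMod.IsSummand.or_of_equiv_prod {N M A B : FGMod R} (h : N.IsSummand M) (hN : N.Indec)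
    (e : M ≃ₗ[Rᵐᵒᵖ] A × B) : N.IsSummand A ∨ N.IsSummand B := by
  obtain ⟨i, p, hpi⟩ := isSummand_iff.mp h
  let fA : N →ₗ[Rᵐᵒᵖ] A := LinearMap.fst _ A B ∘ₗ e.toLinearMap ∘ₗ i
  let fB : N →ₗ[Rᵐᵒᵖ] B := LinearMap.snd _ A B ∘ₗ e.toLinearMap ∘ₗ i
  let gA : A →ₗ[Rᵐᵒᵖ] N := p ∘ₗ e.symm.toLinearMap ∘ₗ LinearMap.inl _ A B
  let gB : B →ₗ[Rᵐᵒᵖ] N := p ∘ₗ e.symm.toLinearMap ∘ₗ LinearMap.inr _ A B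
  have hsum : (gA ∘ₗ fA + gB ∘ₗ fB : Module.End Rᵐᵒᵖ N) = 1 := by
    ext x
    calc p (e.symm ((e (i x)).1, 0)) + p (e.symm (0, (e (i x)).2)) = p (i x) := by
          rw [← map_add, ← map_add]
          simp
      _ = x := LinearMap.congr_fun hpi x
  exact (hN.isUnit_or_isUnit_of_add_eq_one hsum).imp .of_isUnit_comp .of_isUnit_comp

theorem FGMod.induction_on_summands {motive : FGMod R → Prop}
    (subsingleton : ∀ M : FGMod R, Subsingleton M → motive M)
    (indec : ∀ M : FGMod R, M.Indec → motive M)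
    (prod : ∀ M A B : FGMod R, (M ≃ₗ[Rᵐᵒᵖ] A × B) → motive A → motive B → motive M)
    (M : FGMod R) : motive M := by
  induction hn : Module.length Rᵐᵒᵖ M using WellFoundedLT.induction generalizing M with
  | ind n ih =>
    subst hn
    rcases subsingleton_or_nontrivial M with hM | hM
    · exact subsingleton M hM
    by_cases hI : M.Indec
    · exact indec M hI
    obtain ⟨A, B, hAB, hA, hB⟩ : ∃ A B : Submodule Rᵐᵒᵖ M, IsCompl A B ∧ A ≠ ⊥ ∧ B ≠ ⊥ := by
      by_contra! h
      exact hI ⟨hM, fun A B hAB => or_iff_not_imp_left.mpr (h A B hAB)⟩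
    have hA' : A ≠ ⊤ := fun h => hB (eq_bot_of_top_isCompl (h ▸ hAB))
    have hB' : B ≠ ⊤ := fun h => hA (eq_bot_of_isCompl_top (h ▸ hAB))
    exact prod M ⟨A⟩ ⟨B⟩ (Submodule.prodEquivOfIsCompl A B hAB).symm
      (ih _ (Submodule.length_lt hA') ⟨A⟩ rfl) (ih _ (Submodule.length_lt hB') ⟨B⟩ rfl)

theorem finite_ITcls_indec_isSummand (M : FGMod R) :
    {x | ∃ N : FGMod R, N.IsSummand M ∧ N.Indec ∧ x = ITcls R N}.Finite := by
  induction M using FGMod.induction_on_summands with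
  | subsingleton M hM =>
    refine Set.finite_empty.subset ?_
    rintro _ ⟨N, hNM, hN, -⟩
    obtain ⟨i, p, hpi⟩ := FGMod.isSummand_iff.mp hNM
    have hi : Injective i := LeftInverse.injective (LinearMap.congr_fun hpi)
    exact not_subsingleton_iff_nontrivial.mpr hN.1 hi.subsingleton
  | indec M hM =>
    refine (Set.finite_singleton (ITcls R M)).subset ?_
    rintro _ ⟨N, hNM, hN, rfl⟩
    obtain ⟨e⟩ := hM.equiv_of_isSummand hN.1 hNM
    exact ITcls_congr e
  | prod M A B e hA hB =>
    refine (hA.union hB).subset ?_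
    rintro _ ⟨N, hNM, hN, rfl⟩
    exact (hNM.or_of_equiv_prod hN e).imp (⟨N, ·, hN, rfl⟩) (⟨N, ·, hN, rfl⟩)

theorem ITgen_fg (M : FGMod R) : (AddSubgroup.toIntSubmodule (ITgen R M)).FG := by
  rw [Submodule.fg_iff_addSubgroup_fg]
  refine (AddSubgroup.fg_iff _).mpr ⟨_, rfl, (finite_ITcls_indec_isSummand M).subset ?_⟩
  rintro x ⟨N, hNM, hN, -, rfl⟩
  exact ⟨N, hNM, hN, rfl⟩

theorem ITcls_mem_ITgen {N M : FGMod R} (h : N.IsSummand M) : ITcls R N ∈ ITgen R M := by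
  induction N using FGMod.induction_on_summands with
  | subsingleton N hN =>
    rw [ITcls_eq_zero_of_proj N.proj_of_subsingleton]
    exact zero_mem _
  | indec N hN =>
    by_cases hP : N.Proj
    · rw [ITcls_eq_zero_of_proj hP]
      exact zero_mem _
    · exact AddSubgroup.subset_closure ⟨N, h, hN, hP, rfl⟩
  | prod N A B e hA hB =>
    rw [ITcls_eq_add e]
    exact add_mem (hA ((FGMod.IsSummand.of_equiv_prod_left e).trans h))
      (hB ((FGMod.IsSummand.of_equiv_prod_right e).trans h))

end Summands

section Rank

variable {R}

theorem exists_smul_eq_zero_of_finrank_map_eq {A K K' : Type*} [CommRing A] [IsDomain A]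
    [IsNoetherianRing A] [AddCommGroup K] [Module A K] [AddCommGroup K'] [Module A K']
    {f : K →ₗ[A] K'} {H : Submodule A K} (hH : H.FG) (h : finrank A (H.map f) = finrank A H)
    {x : K} (hx : x ∈ H) (hfx : f x = 0) : ∃ a : A, a ≠ 0 ∧ a • x = 0 := by
  have : Module.Finite A H := Module.Finite.iff_fg.mpr hH
  have hker : finrank A (LinearMap.ker (f.domRestrict H)) = 0 := by
    have hadd := Submodule.finrank_quotient_add_finrank (LinearMap.ker (f.domRestrict H))
    rw [(f.domRestrict H).quotKerEquivRange.finrank_eq, LinearMap.range_domRestrict, h] at hadd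
    exact Nat.left_eq_add.mp hadd.symm
  obtain ⟨a, ha, hax⟩ := Module.finrank_eq_zero_iff.mp hker ⟨⟨x, hx⟩, hfx⟩
  exact ⟨a, ha, congrArg (fun y => y.1.1) hax⟩

theorem exists_finrank_map_pow_eventuallyConst {A K : Type*} [Ring A] [StrongRankCondition A]
    [AddCommGroup K] [Module A K] (f : Module.End A K) {H : Submodule A K} (hH : H.FG) :
    ∃ n, ∀ i, n ≤ i → finrank A (H.map (f ^ i)) = finrank A (H.map (f ^ n)) := by
  have hanti : Antitone fun i => finrank A (H.map (f ^ i)) := antitone_nat_of_succ_le fun i => by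
    have : Module.Finite A (H.map (f ^ i)) := Module.Finite.iff_fg.mpr (hH.map _)
    rw [pow_succ', Module.End.mul_eq_comp, Submodule.map_comp]
    exact Submodule.finrank_map_le _ _
  obtain ⟨n, hn⟩ := WellFoundedLT.antitone_chain_condition hanti
  exact ⟨n, fun i hi => (hn i hi).symm⟩

theorem rkIT_map_eq_of_phiIT_eq_zero [IsArtinianRing Rᵐᵒᵖ] {OmK : AddMonoid.End (ITK R)}
    {M : FGMod R} (h : phiIT R OmK M = 0) : rkIT R ((ITgen R M).map OmK) = rkIT R (ITgen R M) := by
  have hpow (i : ℕ) : rkIT R ((ITgen R M).map (OmK ^ i : AddMonoid.End (ITK R))) =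
      finrank ℤ ((AddSubgroup.toIntSubmodule (ITgen R M)).map
        (addMonoidEndRingEquivInt (ITK R) OmK ^ i)) := by
    rw [← map_pow]
    rfl
  have hzero := Nat.sInf_mem (s := {n | ∀ i, n ≤ i →
    rkIT R ((ITgen R M).map (OmK ^ i : AddMonoid.End (ITK R))) =
      rkIT R ((ITgen R M).map (OmK ^ n : AddMonoid.End (ITK R)))}) (by
    simp only [hpow]
    exact exists_finrank_map_pow_eventuallyConst _ (ITgen_fg M))
  rw [show sInf _ = 0 from h] at hzero
  have hone := hzero 1 zero_le_one
  rw [pow_one, pow_zero] at hone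
  exact hone.trans (congrArg (rkIT R) (AddSubgroup.map_id _))

theorem exists_zsmul_eq_zero_of_phiIT_eq_zero [IsArtinianRing Rᵐᵒᵖ] {OmK : AddMonoid.End (ITK R)}
    {M : FGMod R} (h : phiIT R OmK M = 0) {x : ITK R} (hx : x ∈ ITgen R M) (hOx : OmK x = 0) :
    ∃ n : ℤ, n ≠ 0 ∧ n • x = 0 :=
  exists_smul_eq_zero_of_finrank_map_eq (f := OmK.toIntLinearMap) (ITgen_fg M)
    (rkIT_map_eq_of_phiIT_eq_zero h) hx hOx

end Rank

section SimpleMultiplicity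

variable {R}

theorem map_equiv_eq_prod_of_functorial {U : ∀ M : FGMod R, Submodule Rᵐᵒᵖ M}
    (hU : ∀ (M N : FGMod R) (f : M →ₗ[Rᵐᵒᵖ] N), U M ≤ (U N).comap f)
    {A B C : FGMod R} (e : A ≃ₗ[Rᵐᵒᵖ] B × C) : (U A).map e.toLinearMap = (U B).prod (U C) := by
  apply le_antisymm
  · rintro _ ⟨x, hx, rfl⟩
    exact ⟨hU A B (LinearMap.fst _ B C ∘ₗ e.toLinearMap) hx,
      hU A C (LinearMap.snd _ B C ∘ₗ e.toLinearMap) hx⟩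
  · rintro ⟨b, c⟩ ⟨hb, hc⟩
    refine ⟨e.symm (b, c), ?_, e.apply_symm_apply _⟩
    rw [← Prod.fst_add_snd (b, c), map_add]
    exact add_mem (hU B A (e.symm.toLinearMap ∘ₗ LinearMap.inl _ B C) hb)
      (hU C A (e.symm.toLinearMap ∘ₗ LinearMap.inr _ B C) hc)

theorem length_eq_add_of_functorial {U : ∀ M : FGMod R, Submodule Rᵐᵒᵖ M}
    (hU : ∀ (M N : FGMod R) (f : M →ₗ[Rᵐᵒᵖ] N), U M ≤ (U N).comap f)
    {A B C : FGMod R} (e : A ≃ₗ[Rᵐᵒᵖ] B × C) :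
    Module.length Rᵐᵒᵖ (U A) = Module.length Rᵐᵒᵖ (U B) + Module.length Rᵐᵒᵖ (U C) := by
  have hinj : Injective ((U B).subtype.prodMap (U C).subtype) :=
    Prod.map_injective.mpr ⟨Subtype.val_injective, Subtype.val_injective⟩
  have hrange : LinearMap.range ((U B).subtype.prodMap (U C).subtype) =
      (U A).map e.toLinearMap := by
    rw [map_equiv_eq_prod_of_functorial hU, LinearMap.range_prodMap, Submodule.range_subtype,
      Submodule.range_subtype]
  rw [(e.submoduleMap (U A)).length_eq, ← hrange, ← (LinearEquiv.ofInjective _ hinj).length_eq,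
    Module.length_prod]

/-- The number of copies of a simple module `S` in a decomposition of `M` into indecomposables:
the length of the image of the `S`-socle of `M` in the top `M / rad M`. It is written as a
difference of lengths of subfunctors of the identity so that additivity in `M` is immediate. -/
noncomputable def FGMod.simpleMult (S M : FGMod R) : ℤ :=
  (Module.length Rᵐᵒᵖ (isotypicComponent Rᵐᵒᵖ M S)).toNat -
    (Module.length Rᵐᵒᵖ
      (isotypicComponent Rᵐᵒᵖ M S ⊓ Module.jacobson Rᵐᵒᵖ M : Submodule Rᵐᵒᵖ M)).toNat

theorem FGMod.isSummand_of_simpleMult_ne_zero {S M : FGMod R} [IsSimpleModule Rᵐᵒᵖ S]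
    (h : S.simpleMult M ≠ 0) : S.IsSummand M := by
  have hle : ¬ isotypicComponent Rᵐᵒᵖ M S ≤ Module.jacobson Rᵐᵒᵖ M := fun hle =>
    h (by rw [simpleMult, inf_of_le_left hle, sub_self])
  obtain ⟨m, hm, hle⟩ : ∃ m, IsCoatom m ∧ ¬ isotypicComponent Rᵐᵒᵖ M S ≤ m := by
    simpa [Module.jacobson] using hle
  obtain ⟨N, ⟨e⟩, hNm⟩ : ∃ N : Submodule Rᵐᵒᵖ M, Nonempty (N ≃ₗ[Rᵐᵒᵖ] S) ∧ ¬ N ≤ m := by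
    simpa [isotypicComponent] using hle
  have hN : IsAtom N := isSimpleModule_iff_isAtom.mp (.congr e)
  exact ⟨N, m, ⟨hN.not_le_iff_disjoint.mp hNm, (hm.not_le_iff_codisjoint.mp hNm).symm⟩,
    ⟨e.symm⟩⟩

theorem FGMod.simpleMult_self {S : FGMod R} [IsSimpleModule Rᵐᵒᵖ S] :
    S.simpleMult S = 1 := by
  have htop : isotypicComponent Rᵐᵒᵖ S S = ⊤ := top_le_iff.mp (le_sSup ⟨Submodule.topEquiv⟩)
  rw [simpleMult, htop, IsSimpleModule.jacobson_eq_bot, inf_bot_eq, Module.length_top,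
    Module.length_bot, Module.length_eq_one]
  rfl

theorem FGMod.simpleMult_eq_add [IsArtinianRing Rᵐᵒᵖ] {S : FGMod R} [IsSimpleModule Rᵐᵒᵖ S]
    {A B C : FGMod R} (e : B ≃ₗ[Rᵐᵒᵖ] A × C) :
    S.simpleMult B = S.simpleMult A + S.simpleMult C := by
  have hsocle (M N : FGMod R) (f : M →ₗ[Rᵐᵒᵖ] N) := f.le_comap_isotypicComponent S
  rw [simpleMult, length_eq_add_of_functorial hsocle e,
    length_eq_add_of_functorial (U := fun M => isotypicComponent Rᵐᵒᵖ M S ⊓ Module.jacobson Rᵐᵒᵖ M)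
      (fun M N f => inf_le_inf (hsocle M N f) (Module.le_comap_jacobson f)) e,
    ENat.toNat_add Module.length_ne_top Module.length_ne_top,
    ENat.toNat_add Module.length_ne_top Module.length_ne_top, simpleMult, simpleMult]
  push_cast
  ring

theorem exists_ITK_hom_simpleMult [IsArtinianRing Rᵐᵒᵖ] {S : FGMod R}
    [IsSimpleModule Rᵐᵒᵖ S] (hSP : ¬ S.Proj) :
    ∃ f : ITK R →+ ℤ, ∀ M, f (ITcls R M) = S.simpleMult M := by
  refine exists_ITK_hom S.simpleMult (fun A B C => FGMod.simpleMult_eq_add) fun P hP => ?_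
  have : Module.Projective Rᵐᵒᵖ P := hP
  by_contra h
  obtain ⟨i, p, hpi⟩ := FGMod.isSummand_iff.mp (FGMod.isSummand_of_simpleMult_ne_zero h)
  exact hSP (.of_split i p hpi)

end SimpleMultiplicity

section Extensions

variable {R}

theorem exists_comp_eq_of_exact_of_injective {A L M N Q : Type*} [Ring A] [AddCommGroup L]
    [Module A L] [AddCommGroup M] [Module A M] [AddCommGroup N] [Module A N] [AddCommGroup Q]
    [Module A Q] {f : L →ₗ[A] M} {q : M →ₗ[A] N} (hfq : Exact f q) (hf : Injective f)
    {g : Q →ₗ[A] M} (hqg : q ∘ₗ g = 0) : ∃ s : Q →ₗ[A] L, f ∘ₗ s = g := by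
  have hrange (x : Q) : g x ∈ LinearMap.range f := (hfq _).mp (LinearMap.congr_fun hqg x)
  refine ⟨(LinearEquiv.ofInjective f hf).symm.toLinearMap ∘ₗ g.codRestrict _ hrange, ?_⟩
  ext x
  exact congrArg Subtype.val ((LinearEquiv.ofInjective f hf).apply_symm_apply ⟨g x, hrange x⟩)

theorem IsSyzygyEnd.apply_eq_of_exact [IsArtinianRing Rᵐᵒᵖ] {OmK : AddMonoid.End (ITK R)}
    (hOm : IsSyzygyEnd R OmK) {P E M : FGMod R} {ι : P →ₗ[Rᵐᵒᵖ] E} {π : E →ₗ[Rᵐᵒᵖ] M}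
    (hιπ : Exact ι π) (hι : Injective ι) (hπ : Surjective π) (hP : P.Proj) :
    OmK (ITcls R E) = OmK (ITcls R M) := by
  obtain ⟨Q, q, hQ, hq, -⟩ := exists_isProjCover E
  have hle : LinearMap.ker q ≤ LinearMap.ker (π ∘ₗ q) := LinearMap.ker_le_ker_comp q π
  obtain ⟨s, hs⟩ := exists_comp_eq_of_exact_of_injective hιπ hι
    (g := q.domRestrict (LinearMap.ker (π ∘ₗ q))) (LinearMap.ext fun x => x.2)
  replace hs (x : LinearMap.ker (π ∘ₗ q)) : ι (s x) = q x := LinearMap.congr_fun hs x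
  have hexact : Exact (Submodule.inclusion hle) s := by
    rw [LinearMap.exact_iff, Submodule.range_inclusion]
    ext x
    rw [LinearMap.mem_ker, ← hι.eq_iff, hs, map_zero]
    rfl
  have hsurj : Surjective s := fun p => by
    obtain ⟨x, hx⟩ := hq (ι p)
    have hx' : π (q x) = 0 := by rw [hx, hιπ.apply_apply_eq_zero]
    exact ⟨⟨x, hx'⟩, hι ((hs _).trans hx)⟩
  rw [hOm.apply_ITcls hQ hq, hOm.apply_ITcls (f := π ∘ₗ q) hQ (hπ.comp hq)]
  exact (ITcls_eq_of_exact_of_proj (A := ⟨_⟩) (B := ⟨_⟩) hexact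
    (Submodule.inclusion_injective hle) hsurj hP).symm

theorem exists_rightInverse_of_exact_of_isSimpleModule {A P E S : Type*} [Ring A]
    [AddCommGroup P] [Module A P] [AddCommGroup E] [Module A E] [AddCommGroup S] [Module A S]
    [Module.Projective A P] [IsSimpleModule A S] {ι : P →ₗ[A] E} {π : E →ₗ[A] S}
    (hιπ : Exact ι π) (hι : Injective ι) (hπ : Surjective π) {i : S →ₗ[A] E} {p : E →ₗ[A] S}
    (hpi : p ∘ₗ i = LinearMap.id) : ∃ s : S →ₗ[A] E, π ∘ₗ s = LinearMap.id := by
  by_cases h : π ∘ₗ i = 0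
  · obtain ⟨j, rfl⟩ := exists_comp_eq_of_exact_of_injective hιπ hι h
    have : Module.Projective A S := .of_split j (p ∘ₗ ι) hpi
    exact Module.projective_lifting_property π LinearMap.id hπ
  · let e := LinearEquiv.ofBijective (π ∘ₗ i) (LinearMap.bijective_of_ne_zero h)
    exact ⟨i ∘ₗ e.symm.toLinearMap, LinearMap.ext e.apply_symm_apply⟩

theorem exists_rightInverse_of_phiIT_eq_zero [IsArtinianRing Rᵐᵒᵖ] {OmK : AddMonoid.End (ITK R)}
    (hOm : IsSyzygyEnd R OmK) (hφ : ∀ M, phiIT R OmK M = 0) {P E S : FGMod R}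
    [IsSimpleModule Rᵐᵒᵖ S] {ι : P →ₗ[Rᵐᵒᵖ] E} {π : E →ₗ[Rᵐᵒᵖ] S} (hιπ : Exact ι π)
    (hι : Injective ι) (hπ : Surjective π) (hP : P.Proj) :
    ∃ s : S →ₗ[Rᵐᵒᵖ] E, π ∘ₗ s = LinearMap.id := by
  by_cases hS : S.Proj
  · have : Module.Projective Rᵐᵒᵖ S := hS
    exact Module.projective_lifting_property π LinearMap.id hπ
  have hmem : ITcls R E - ITcls R S ∈ ITgen R (E.prod S) :=
    sub_mem (ITcls_mem_ITgen (.of_equiv_prod_left (.refl _ _)))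
      (ITcls_mem_ITgen (.of_equiv_prod_right (.refl _ _)))
  obtain ⟨n, hn, hnx⟩ := exists_zsmul_eq_zero_of_phiIT_eq_zero (hφ _) hmem (by
    rw [map_sub, hOm.apply_eq_of_exact hιπ hι hπ hP, sub_self])
  obtain ⟨mult, hmult⟩ := exists_ITK_hom_simpleMult hS
  have hES : S.simpleMult E = 1 := by
    have h := congrArg mult hnx
    rw [map_zsmul, map_sub, map_zero, hmult, hmult, smul_eq_zero_iff_right hn,
      FGMod.simpleMult_self] at h
    exact sub_eq_zero.mp h
  obtain ⟨i, p, hpi⟩ := FGMod.isSummand_iff.mp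
    (FGMod.isSummand_of_simpleMult_ne_zero (hES.trans_ne one_ne_zero))
  have : Module.Projective Rᵐᵒᵖ P := hP
  exact exists_rightInverse_of_exact_of_isSimpleModule hιπ hι hπ hpi

theorem FGMod.exists_pushout {P X : FGMod R} (N : Submodule Rᵐᵒᵖ X) (f : N →ₗ[Rᵐᵒᵖ] P) :
    ∃ (E : FGMod R) (ι : P →ₗ[Rᵐᵒᵖ] E) (j : X →ₗ[Rᵐᵒᵖ] E) (π : E →ₗ[Rᵐᵒᵖ] X ⧸ N),
      Injective ι ∧ Exact ι π ∧ Surjective π ∧ j ∘ₗ N.subtype = ι ∘ₗ f := by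
  let K : Submodule Rᵐᵒᵖ (P × X) := LinearMap.range (f.prod (-N.subtype))
  let ι : P →ₗ[Rᵐᵒᵖ] (P × X) ⧸ K := K.mkQ ∘ₗ LinearMap.inl _ P X
  let j : X →ₗ[Rᵐᵒᵖ] (P × X) ⧸ K := K.mkQ ∘ₗ LinearMap.inr _ P X
  have hj (x : N) : j x = ι (f x) := by
    rw [eq_comm]
    exact (Submodule.Quotient.eq K).mpr ⟨x, by simp⟩
  let π : ((P × X) ⧸ K) →ₗ[Rᵐᵒᵖ] X ⧸ N := K.liftQ (N.mkQ ∘ₗ LinearMap.snd _ P X) (by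
    rintro _ ⟨x, rfl⟩
    simp)
  refine ⟨⟨(P × X) ⧸ K⟩, ι, j, π, ?_, ?_, ?_, LinearMap.ext hj⟩
  · refine (injective_iff_map_eq_zero ι).mpr fun p hp => ?_
    obtain ⟨x, hx⟩ := (Submodule.Quotient.mk_eq_zero K).mp hp
    have hx0 : x = 0 := Subtype.ext (neg_eq_zero.mp (congrArg Prod.snd hx))
    rw [← show f x = p from congrArg Prod.fst hx, hx0, map_zero]
  · intro e
    constructor
    · intro he
      obtain ⟨⟨p, x⟩, rfl⟩ := K.mkQ_surjective e
      have hx : x ∈ N := (Submodule.Quotient.mk_eq_zero N).mp he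
      refine ⟨p + f ⟨x, hx⟩, ?_⟩
      calc ι (p + f ⟨x, hx⟩) = ι p + j x := by rw [map_add, hj ⟨x, hx⟩]
        _ = K.mkQ (p, x) := by
          rw [← Prod.fst_add_snd (p, x), map_add]
          rfl
    · rintro ⟨p, rfl⟩
      exact map_zero N.mkQ
  · intro y
    obtain ⟨x, rfl⟩ := N.mkQ_surjective y
    exact ⟨j x, rfl⟩

theorem exists_extension_of_phiIT_eq_zero [IsArtinianRing Rᵐᵒᵖ] {OmK : AddMonoid.End (ITK R)}
    (hOm : IsSyzygyEnd R OmK) (hφ : ∀ M, phiIT R OmK M = 0) {P X : FGMod R} (hP : P.Proj)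
    (N : Submodule Rᵐᵒᵖ X) [IsSimpleModule Rᵐᵒᵖ (X ⧸ N)] (f : N →ₗ[Rᵐᵒᵖ] P) :
    ∃ g : X →ₗ[Rᵐᵒᵖ] P, g ∘ₗ N.subtype = f := by
  obtain ⟨E, ι, j, π, hι, hιπ, hπ, hj⟩ := FGMod.exists_pushout N f
  obtain ⟨r, hr⟩ := ((hιπ.split_tfae hι hπ).out 0 1).mp
    (exists_rightInverse_of_phiIT_eq_zero (S := ⟨X ⧸ N⟩) hOm hφ hιπ hι hπ hP)
  exact ⟨r ∘ₗ j, by rw [LinearMap.comp_assoc, hj, ← LinearMap.comp_assoc, hr, LinearMap.id_comp]⟩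

theorem baer_of_forall_isSimpleModule_quotient {A Q : Type*} [Ring A] [IsArtinianRing A]
    [AddCommGroup Q] [Module A Q]
    (h : ∀ (J : Ideal A) (N : Submodule A J), IsSimpleModule A (J ⧸ N) →
      ∀ f : N →ₗ[A] Q, ∃ g : J →ₗ[A] Q, g ∘ₗ N.subtype = f) :
    Module.Baer A Q := by
  intro I
  induction I using WellFoundedGT.induction with
  | ind I ih =>
    intro f
    by_cases hI : I = ⊤
    · subst hI
      exact ⟨f ∘ₗ Submodule.topEquiv.symm.toLinearMap, fun x _ => rfl⟩
    obtain ⟨J, hIJ⟩ := exists_covBy_of_wellFoundedLT (a := I) (by rwa [isMax_iff_eq_top])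
    obtain ⟨g, hg⟩ := h J _ ((covBy_iff_quot_is_simple hIJ.le).mp hIJ)
      (f ∘ₗ (Submodule.comapSubtypeEquivOfLe hIJ.le).toLinearMap)
    obtain ⟨g', hg'⟩ := ih J hIJ.lt g
    refine ⟨g', fun x hx => ?_⟩
    rw [hg' x (hIJ.le hx)]
    exact LinearMap.congr_fun hg ⟨⟨x, hIJ.le hx⟩, hx⟩

theorem injective_of_forall_phiIT_eq_zero [IsArtinianRing Rᵐᵒᵖ] {OmK : AddMonoid.End (ITK R)}
    (hOm : IsSyzygyEnd R OmK) (hφ : ∀ M, phiIT R OmK M = 0) : Module.Injective Rᵐᵒᵖ Rᵐᵒᵖ :=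
  (baer_of_forall_isSimpleModule_quotient fun J N _ =>
    exists_extension_of_phiIT_eq_zero (P := ⟨Rᵐᵒᵖ⟩) (X := ⟨J⟩) hOm hφ
      (inferInstanceAs (Module.Projective Rᵐᵒᵖ Rᵐᵒᵖ)) N).injective

end Extensions

theorem artinAlgebra_selfinjective_iff_phidim_eq_zero_general
    (Λ : Type u) [Ring Λ] [IsArtinianRing Λᵐᵒᵖ]
    (OmK : AddMonoid.End (ITK Λ)) (hOm : IsSyzygyEnd Λ OmK) :
    (Module.Injective Λ Λ ∧ Module.Injective Λᵐᵒᵖ Λᵐᵒᵖ) ↔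
      ∀ M : FGMod Λ, phiIT Λ OmK M = 0 := by
  have := SelfInjective.isArtinian_op_self (L := Λ)
  constructor
  · rintro ⟨-, hright⟩
    have hΛ : Module.Injective Λᵐᵒᵖ Λ := SelfInjective.injective_op_self hright
    have : IsNoetherianRing Λ := SelfInjective.isNoetherianRing_of_injective_op hΛ
    exact phiIT_eq_zero_of_injective (hOm.injective_of_injective hΛ)
  · intro hφ
    have hright : Module.Injective Λᵐᵒᵖ Λᵐᵒᵖ := injective_of_forall_phiIT_eq_zero hOm hφ
    exact ⟨SelfInjective.injective_self_of_injective_op (SelfInjective.injective_op_self hright),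
      hright⟩

/-- An artin algebra `Λ` is self-injective (injective as a left and
as a right module over itself) iff `φ(M) = 0` for all f.g. right `Λ`-modules `M`. -/
theorem artinAlgebra_selfinjective_iff_phidim_eq_zero
    (k : Type u) [CommRing k] [IsArtinianRing k]
    (Λ : Type u) [Ring Λ] [Algebra k Λ] [Module.Finite k Λ]
    (OmK : AddMonoid.End (ITK Λ)) (hOm : IsSyzygyEnd Λ OmK) :
    (Module.Injective Λ Λ ∧ Module.Injective Λᵐᵒᵖ Λᵐᵒᵖ) ↔
      ∀ M : FGMod Λ, phiIT Λ OmK M = 0 := by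
  have : Module.Finite k Λᵐᵒᵖ := Module.Finite.equiv (MulOpposite.opLinearEquiv k)
  have : IsArtinianRing Λᵐᵒᵖ := IsArtinianRing.of_finite k Λᵐᵒᵖ
  exact artinAlgebra_selfinjective_iff_phidim_eq_zero_general Λ OmK hOm
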